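/- Let M ≥ 2 and let μ̂_j = A_j y + b_j (j = 1,…,M) be affine estimators with ‖A_j‖_op ≤ 1 for all j, where the noise ξ has i.i.d. N(0,σ²) coordinates. Let θ̂_pen be any minimizer over the simplex Λ^M of H_pen(θ) = C_p(θ) + (1/2)pen(θ). Then for every x > 0, with probability at least 1 − 2exp(−x), ‖μ̂_{θ̂_pen} − f‖² ≤ min_{j=1,…,M} ‖μ̂_j − f‖² + 46σ²(2 log M + x). -/

import Mathlib

open MeasureTheory ProbabilityTheory Finset

noncomputable section

/-- Squared Euclidean norm on `Fin n → ℝ`. -/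
def sqNorm {n : ℕ} (v : Fin n → ℝ) : ℝ := ∑ i, (v i) ^ 2

/-- The simplex `Λ^M` of probability vectors in `ℝ^M`. -/
def simplex (M : ℕ) : Set (Fin M → ℝ) := {θ | (∀ j, 0 ≤ θ j) ∧ ∑ j, θ j = 1}

/-- Operator norm (ℓ²→ℓ²) of a square matrix. -/
def opNorm {n : ℕ} (A : Matrix (Fin n) (Fin n) ℝ) : ℝ :=
  sSup {c | ∃ x : Fin n → ℝ, sqNorm x ≤ 1 ∧ c = Real.sqrt (sqNorm (A.mulVec x))}

/-- The distribution of a vector with i.i.d. `N(0,σ²)` coordinates. -/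
def gaussPi (n : ℕ) (σ : ℝ) : Measure (Fin n → ℝ) :=
  Measure.pi fun _ => gaussianReal 0 ⟨σ ^ 2, sq_nonneg σ⟩

/-- The aggregated affine estimator `μ̂_θ = A_θ y + b_θ = ∑_j θ_j (A_j y + b_j)`. -/
def muV {n M : ℕ} (A : Fin M → Matrix (Fin n) (Fin n) ℝ) (b : Fin M → Fin n → ℝ)
    (y : Fin n → ℝ) (θ : Fin M → ℝ) : Fin n → ℝ :=
  ∑ j, θ j • ((A j).mulVec y + b j)

/-- Mallows' `C_p` criterion. -/
def Cp {n M : ℕ} (A : Fin M → Matrix (Fin n) (Fin n) ℝ) (b : Fin M → Fin n → ℝ)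
    (σ : ℝ) (y : Fin n → ℝ) (θ : Fin M → ℝ) : ℝ :=
  sqNorm (muV A b y θ) - 2 * ∑ i, y i * muV A b y θ i
    + 2 * σ ^ 2 * ∑ j, θ j * (A j).trace

/-- The penalty `pen(θ) = ∑_j θ_j ‖μ̂_θ - μ̂_j‖²`. -/
def pen {n M : ℕ} (A : Fin M → Matrix (Fin n) (Fin n) ℝ) (b : Fin M → Fin n → ℝ)
    (y : Fin n → ℝ) (θ : Fin M → ℝ) : ℝ :=
  ∑ j, θ j * sqNorm (muV A b y θ - ((A j).mulVec y + b j))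

/-- The penalized criterion `H_pen(θ) = C_p(θ) + pen(θ)/2`. -/
def Hpen {n M : ℕ} (A : Fin M → Matrix (Fin n) (Fin n) ℝ) (b : Fin M → Fin n → ℝ)
    (σ : ℝ) (y : Fin n → ℝ) (θ : Fin M → ℝ) : ℝ :=
  Cp A b σ y θ + pen A b y θ / 2


lemma stdpi_density (n : ℕ) : (Measure.pi fun _ : Fin n => gaussianReal 0 1) =
    volume.withDensity (fun x : Fin n → ℝ => ENNReal.ofReal (∏ i, gaussianPDFReal 0 1 (x i))) := by
  refine Measure.pi_eq ?_
  intro s hs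
  rw [withDensity_apply _ (MeasurableSet.univ_pi hs), volume_pi, Measure.restrict_pi_pi,
    ← ofReal_integral_eq_lintegral_ofReal]
  · rw [integral_fintype_prod_eq_prod (𝕜 := ℝ) (f := fun _ => gaussianPDFReal 0 1),
      ENNReal.ofReal_prod_of_nonneg]
    · refine Finset.prod_congr rfl fun i _ => ?_
      rw [gaussianReal_apply_eq_integral _ (by norm_num)]
    · intro i _
      exact integral_nonneg fun x => gaussianPDFReal_nonneg _ _ _
  · exact Integrable.fintype_prod (f := fun _ : Fin n => gaussianPDFReal 0 1) fun i => (integrable_gaussianPDFReal _ _).restrict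
  · exact ae_of_all _ fun x => Finset.prod_nonneg fun i _ => gaussianPDFReal_nonneg _ _ _

lemma stdpi_scale (n : ℕ) (σ : ℝ) : (Measure.pi fun _ : Fin n => gaussianReal 0 ⟨σ ^ 2, sq_nonneg σ⟩) =
    (Measure.pi fun _ : Fin n => gaussianReal 0 1).map (fun x => σ • x) := by
  have := Measure.pi_map_pi (μ := fun _ : Fin n => gaussianReal 0 1) (f := fun _ x => σ * x)
    (fun i => by fun_prop)
  simp only [gaussianReal_map_const_mul] at this
  simp only [mul_zero, mul_one] at this
  exact this.symm

/-- change of variables -/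
lemma cov (n : ℕ) (L : Matrix (Fin n) (Fin n) ℝ) (hL : L.det ≠ 0) (c : Fin n → ℝ) :
    ∫⁻ x, ENNReal.ofReal (∏ i, gaussianPDFReal 0 1 ((L.mulVec x - c) i)) = ENNReal.ofReal |L.det⁻¹| := by
  set F : (Fin n → ℝ) → ENNReal := fun x => ENNReal.ofReal (∏ i, gaussianPDFReal 0 1 (x i)) with hF
  have hFm : Measurable F := by
    apply ENNReal.measurable_ofReal.comp
    exact Finset.measurable_prod _ fun i _ => (measurable_gaussianPDFReal 0 1).comp (measurable_pi_apply i)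
  have h1 : ∫⁻ x, F x = 1 := by
    have := congrArg (fun μ => μ Set.univ) (stdpi_density n)
    simp only [measure_univ, withDensity_apply _ MeasurableSet.univ, Measure.restrict_univ] at this
    exact this.symm
  have h2 : ∫⁻ x, F (x - c) = 1 := by rw [lintegral_sub_right_eq_self F c, h1]
  have h3 := Real.map_matrix_volume_pi_eq_smul_volume_pi hL
  have hLm : Measurable (Matrix.toLin' L) := (LinearMap.continuous_of_finiteDimensional _).measurable
  have h4 := lintegral_map (μ := volume) (f := fun x => F (x - c)) (g := Matrix.toLin' L) (hFm.comp (measurable_sub_const c)) hLm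
  rw [h3, lintegral_smul_measure, h2] at h4
  simp only [Matrix.toLin'_apply] at h4
  rw [← h4]; simp

lemma dot_cs {n : ℕ} (x y : Fin n → ℝ) : (x ⬝ᵥ y) ^ 2 ≤ (x ⬝ᵥ x) * (y ⬝ᵥ y) := by
  have := Finset.sum_mul_sq_le_sq_mul_sq Finset.univ x y
  simpa [dotProduct, pow_two] using this

lemma dot_nn {n : ℕ} (x : Fin n → ℝ) : 0 ≤ x ⬝ᵥ x := by
  rw [dotProduct]; exact Finset.sum_nonneg fun i _ => mul_self_nonneg _

lemma tr_bound {n : ℕ} (B : Matrix (Fin n) (Fin n) ℝ)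
    (hB : ∀ x, B.mulVec x ⬝ᵥ B.mulVec x ≤ 4 * (x ⬝ᵥ x)) (v : Fin n → ℝ) :
    B.transpose.mulVec v ⬝ᵥ B.transpose.mulVec v ≤ 4 * (v ⬝ᵥ v) := by
  set u := B.transpose.mulVec v with hu
  have h1 : u ⬝ᵥ u = v ⬝ᵥ B.mulVec u := by
    conv_lhs => rw [hu, Matrix.mulVec_transpose, ← Matrix.dotProduct_mulVec, ← Matrix.mulVec_transpose]
  have h2 := dot_cs v (B.mulVec u)
  have h3 := hB u
  rw [← h1] at h2
  have h4 := dot_nn u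
  have h5 := dot_nn v
  by_contra! h
  nlinarith [mul_le_mul_of_nonneg_left h3 h5]

lemma key_mat {n : ℕ} (B : Matrix (Fin n) (Fin n) ℝ)
    (hB : ∀ x, B.mulVec x ⬝ᵥ B.mulVec x ≤ 4 * (x ⬝ᵥ x)) (v : Fin n → ℝ) (a : ℝ) (ha : 0 < a)
    (ha' : a ≤ 1 / 16) :
    ∃ (L : Matrix (Fin n) (Fin n) ℝ) (c : Fin n → ℝ), |L.det| = Real.exp (-(a * B.trace)) ∧
      ∀ x, -(x ⬝ᵥ x) / 2 + a * (x ⬝ᵥ (B.mulVec x + v)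
        - (B.mulVec x + v) ⬝ᵥ (B.mulVec x + v) / 4) ≤
        - ((L.mulVec x - c) ⬝ᵥ (L.mulVec x - c)) / 2 := by
  set S : Matrix (Fin n) (Fin n) ℝ := 1 - a • (B + B.transpose) + (a / 2) • (B.transpose * B) with hS
  have hSx : ∀ x, x ⬝ᵥ S.mulVec x = x ⬝ᵥ x - 2 * a * (x ⬝ᵥ B.mulVec x)
      + a / 2 * (B.mulVec x ⬝ᵥ B.mulVec x) := by
    intro x
    have e1 : x ⬝ᵥ B.transpose.mulVec x = x ⬝ᵥ B.mulVec x := by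
      rw [Matrix.mulVec_transpose, dotProduct_comm, Matrix.dotProduct_mulVec]
    have e2 : x ⬝ᵥ (B.transpose * B).mulVec x = B.mulVec x ⬝ᵥ B.mulVec x := by
      rw [← Matrix.mulVec_mulVec, Matrix.dotProduct_mulVec, Matrix.vecMul_transpose]
    simp only [hS, Matrix.add_mulVec, Matrix.sub_mulVec, Matrix.smul_mulVec, Matrix.one_mulVec,
      dotProduct_add, dotProduct_sub, dotProduct_smul, smul_eq_mul, e1, e2]
    ring
  have hSh : S.IsHermitian := by
    rw [Matrix.IsHermitian, Matrix.conjTranspose_eq_transpose_of_trivial]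
    simp [hS, Matrix.transpose_add, Matrix.transpose_sub, Matrix.transpose_smul,
      Matrix.transpose_mul, add_comm]
  set U : Matrix (Fin n) (Fin n) ℝ := (hSh.eigenvectorUnitary : Matrix (Fin n) (Fin n) ℝ) with hU
  have hUU : U.transpose * U = 1 := by
    have := Unitary.coe_star_mul_self hSh.eigenvectorUnitary
    rwa [Matrix.star_eq_conjTranspose, Matrix.conjTranspose_eq_transpose_of_trivial] at this
  have hUU' : U * U.transpose = 1 := mul_eq_one_comm.mp hUU
  set s := hSh.eigenvalues with hs
  have hSU : S = U * Matrix.diagonal s * U.transpose := by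
    have := hSh.spectral_theorem
    rw [Unitary.conjStarAlgAut_apply, Matrix.star_eq_conjTranspose,
      Matrix.conjTranspose_eq_transpose_of_trivial] at this
    exact this
  set q : Fin n → Fin n → ℝ := fun i => U.mulVec (Pi.single i 1) with hq
  have iso : ∀ x y, U.transpose.mulVec x ⬝ᵥ U.transpose.mulVec y = x ⬝ᵥ y := by
    intro x y
    rw [Matrix.dotProduct_mulVec, Matrix.vecMul_transpose, Matrix.mulVec_mulVec, hUU',
      Matrix.one_mulVec]
  have hUq : ∀ i, U.transpose.mulVec (q i) = Pi.single i 1 := by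
    intro i; rw [hq]; simp only [Matrix.mulVec_mulVec, hUU, Matrix.one_mulVec]
  have hqq : ∀ i, q i ⬝ᵥ q i = 1 := by
    intro i; rw [← iso, hUq]; simp
  have hSz : ∀ x, x ⬝ᵥ S.mulVec x = ∑ i, s i * (U.transpose.mulVec x i) ^ 2 := by
    intro x
    rw [hSU, ← Matrix.mulVec_mulVec, ← Matrix.mulVec_mulVec, Matrix.dotProduct_mulVec,
      ← Matrix.mulVec_transpose]
    simp only [dotProduct, Matrix.mulVec_diagonal]
    exact Finset.sum_congr rfl fun i _ => by ring
  have hsq : ∀ i, s i = q i ⬝ᵥ S.mulVec (q i) := by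
    intro i
    rw [hSz, hUq]
    simp [Pi.single_apply]
  set t : Fin n → ℝ := fun i => q i ⬝ᵥ B.mulVec (q i) with ht
  have hβ : ∀ i, B.mulVec (q i) ⬝ᵥ B.mulVec (q i) ≤ 4 := by
    intro i; have := hB (q i); rw [hqq] at this; linarith
  have htβ : ∀ i, t i ^ 2 ≤ B.mulVec (q i) ⬝ᵥ B.mulVec (q i) := by
    intro i; have := dot_cs (q i) (B.mulVec (q i)); rw [hqq] at this; simpa [ht] using this
  have ht2 : ∀ i, |t i| ≤ 2 := by
    intro i; exact abs_le_of_sq_le_sq (by nlinarith [hβ i, htβ i]) (by norm_num)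
  have hsum : ∑ i, t i = B.trace := by
    have e : (U.transpose * (B * U)).trace = B.trace := by
      rw [Matrix.trace_mul_comm, Matrix.mul_assoc, hUU', Matrix.mul_one]
    rw [← e, Matrix.trace]
    refine Finset.sum_congr rfl fun i _ => ?_
    simp only [ht, hq, Matrix.mulVec_mulVec, Matrix.mulVec_single_one]
    rfl
  have hexp1 : ∀ i, Real.exp (-(2 * a * t i)) ≤ s i := by
    intro i
    have h2 := abs_le.mp (ht2 i)
    have h1 := Real.abs_exp_sub_one_sub_id_le (x := -(2 * a * t i))
      (abs_le.mpr ⟨by nlinarith, by nlinarith⟩)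
    have h3 := (abs_le.mp h1).2
    rw [hsq, hSx, hqq]
    have h4 := htβ i
    change _ ≤ 1 - 2 * a * t i + _
    have : (2 * a * t i) ^ 2 ≤ a / 2 * (B.mulVec (q i) ⬝ᵥ B.mulVec (q i)) := by
      have : 0 ≤ t i ^ 2 := sq_nonneg _
      calc (2 * a * t i) ^ 2 = (4 * a) * (a * t i ^ 2) := by ring
        _ ≤ (1 / 2) * (a * t i ^ 2) := by
          apply mul_le_mul_of_nonneg_right (by linarith) (by positivity)
        _ ≤ _ := by nlinarith
    nlinarith
  have hexp2 : ∀ i, Real.exp (2 * a * t i) ≤ 2 := by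
    intro i
    have h2 := abs_le.mp (ht2 i)
    have h5 : |2 * a * t i| ≤ 1 / 2 := abs_le.mpr ⟨by nlinarith, by nlinarith⟩
    have h1 := Real.abs_exp_sub_one_sub_id_le (x := 2 * a * t i) (by linarith)
    have h3 := (abs_le.mp h1).2
    have h6 := abs_le.mp h5
    nlinarith
  set w : Fin n → ℝ := a • (v - (1 / 2 : ℝ) • B.transpose.mulVec v) with hw
  have hww : w ⬝ᵥ w ≤ 4 * a ^ 2 * (v ⬝ᵥ v) := by
    have h1 := tr_bound B hB v
    set r := B.transpose.mulVec v
    have h2 := dot_nn (v + (1 / 2 : ℝ) • r)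
    have e : w ⬝ᵥ w = a ^ 2 * (v ⬝ᵥ v - v ⬝ᵥ r + r ⬝ᵥ r / 4) := by
      simp only [hw, smul_dotProduct, dotProduct_smul, sub_dotProduct, dotProduct_sub, smul_eq_mul,
        dotProduct_comm r v]
      ring
    simp only [smul_dotProduct, dotProduct_smul, add_dotProduct, dotProduct_add, smul_eq_mul,
        dotProduct_comm r v] at h2
    rw [e, mul_comm 4, mul_assoc]
    apply mul_le_mul_of_nonneg_left _ (sq_nonneg a)
    nlinarith
  refine ⟨Matrix.diagonal (fun i => Real.exp (-(a * t i))) * U.transpose,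
    fun i => Real.exp (a * t i) * U.transpose.mulVec w i, ?_, ?_⟩
  · have hd : |U.det| = 1 := by
      have := congrArg Matrix.det hUU
      rw [Matrix.det_mul, Matrix.det_transpose, Matrix.det_one] at this
      rcases mul_self_eq_one_iff.mp this with h | h <;> simp [h]
    rw [Matrix.det_mul, Matrix.det_transpose, Matrix.det_diagonal, abs_mul, hd, mul_one,
      ← Real.exp_sum, Real.abs_exp, Finset.sum_neg_distrib, ← Finset.mul_sum, hsum]
  · intro x
    set z := U.transpose.mulVec x with hz
    set p := U.transpose.mulVec w with hp
    have h1 : ((Matrix.diagonal (fun i => Real.exp (-(a * t i))) * U.transpose).mulVec x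
        - fun i => Real.exp (a * t i) * p i) ⬝ᵥ
        ((Matrix.diagonal (fun i => Real.exp (-(a * t i))) * U.transpose).mulVec x
        - fun i => Real.exp (a * t i) * p i) ≤ x ⬝ᵥ S.mulVec x - 2 * (x ⬝ᵥ w) + 2 * (w ⬝ᵥ w) := by
      rw [hSz, ← iso x w, ← iso w w, ← Matrix.mulVec_mulVec, ← hz, ← hp]
      simp only [dotProduct, Finset.mul_sum, Pi.sub_apply, Matrix.mulVec_diagonal]
      rw [← Finset.sum_sub_distrib, ← Finset.sum_add_distrib]
      refine Finset.sum_le_sum fun i _ => ?_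
      have e1 : Real.exp (-(a * t i)) * Real.exp (a * t i) = 1 := by
        rw [← Real.exp_add]; simp
      have e2 : Real.exp (-(2 * a * t i)) = Real.exp (-(a * t i)) ^ 2 := by
        rw [pow_two, ← Real.exp_add]; ring_nf
      have e3 : Real.exp (2 * a * t i) = Real.exp (a * t i) ^ 2 := by
        rw [pow_two, ← Real.exp_add]; ring_nf
      have k1 := mul_le_mul_of_nonneg_right (hexp1 i) (sq_nonneg (z i))
      have k2 := mul_le_mul_of_nonneg_right (hexp2 i) (sq_nonneg (p i))
      rw [e2] at k1
      rw [e3] at k2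
      have : (Real.exp (-(a * t i)) * z i - Real.exp (a * t i) * p i) *
        (Real.exp (-(a * t i)) * z i - Real.exp (a * t i) * p i) =
        Real.exp (-(a * t i)) ^ 2 * z i ^ 2 - 2 * (Real.exp (-(a * t i)) * Real.exp (a * t i)) * (z i * p i)
          + Real.exp (a * t i) ^ 2 * p i ^ 2 := by ring
      rw [this, e1]
      linarith
    have h2 : x ⬝ᵥ w = a * (x ⬝ᵥ v - (B.mulVec x ⬝ᵥ v) / 2) := by
      have : x ⬝ᵥ B.transpose.mulVec v = B.mulVec x ⬝ᵥ v := by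
        rw [Matrix.dotProduct_mulVec, Matrix.vecMul_transpose]
      simp only [hw, dotProduct_smul, dotProduct_sub, smul_eq_mul, this]
      ring
    rw [hSx, h2] at h1
    have h3 : 2 * (w ⬝ᵥ w) ≤ a / 2 * (v ⬝ᵥ v) := by
      have := dot_nn v
      have : 16 * a * (a * (v ⬝ᵥ v)) ≤ 1 * (a * (v ⬝ᵥ v)) :=
        mul_le_mul_of_nonneg_right (by linarith) (by positivity)
      nlinarith
    simp only [dotProduct_add, add_dotProduct, dotProduct_comm v (B.mulVec x)]
    linarith

lemma pdf_prod {n : ℕ} (x : Fin n → ℝ) : ∏ i, gaussianPDFReal 0 1 (x i) =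
    (√(2 * Real.pi))⁻¹ ^ n * Real.exp (-(x ⬝ᵥ x) / 2) := by
  simp only [gaussianPDFReal, Finset.prod_mul_distrib, ← Real.exp_sum]
  simp only [NNReal.coe_one, mul_one, sub_zero, Finset.prod_const, Finset.card_univ, Fintype.card_fin,
    dotProduct, ← Finset.sum_div, Finset.sum_neg_distrib, pow_two]

lemma mgf_bd {n : ℕ} (B : Matrix (Fin n) (Fin n) ℝ)
    (hB : ∀ x, B.mulVec x ⬝ᵥ B.mulVec x ≤ 4 * (x ⬝ᵥ x)) (v : Fin n → ℝ) (a : ℝ) (ha : 0 < a)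
    (ha' : a ≤ 1 / 16) :
    ∫⁻ x, ENNReal.ofReal (Real.exp (a * (x ⬝ᵥ (B.mulVec x + v) - B.trace
        - (B.mulVec x + v) ⬝ᵥ (B.mulVec x + v) / 4)))
      ∂(Measure.pi fun _ : Fin n => gaussianReal 0 1) ≤ 1 := by
  obtain ⟨L, c, hdet, hL⟩ := key_mat B hB v a ha ha'
  have hmeas : Measurable fun x : Fin n → ℝ => ENNReal.ofReal (Real.exp (a * (x ⬝ᵥ (B.mulVec x + v) - B.trace
        - (B.mulVec x + v) ⬝ᵥ (B.mulVec x + v) / 4))) := by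
    apply ENNReal.measurable_ofReal.comp
    apply Continuous.measurable
    fun_prop
  have hFm : Measurable (fun x : Fin n → ℝ => ENNReal.ofReal (∏ i, gaussianPDFReal 0 1 (x i))) := by
    apply ENNReal.measurable_ofReal.comp
    exact Finset.measurable_prod _ fun i _ => (measurable_gaussianPDFReal 0 1).comp (measurable_pi_apply i)
  rw [stdpi_density, lintegral_withDensity_eq_lintegral_mul _ hFm hmeas]
  have hd0 : L.det ≠ 0 := by
    intro h
    rw [h, abs_zero] at hdet
    exact (Real.exp_pos _).ne hdet
  calc _ ≤ ∫⁻ x, ENNReal.ofReal (Real.exp (-(a * B.trace))) *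
        ENNReal.ofReal (∏ i, gaussianPDFReal 0 1 ((L.mulVec x - c) i)) := by
        refine lintegral_mono fun x => ?_
        simp only [Pi.mul_apply]
        rw [← ENNReal.ofReal_mul' (Real.exp_nonneg _), ← ENNReal.ofReal_mul (Real.exp_nonneg _)]
        apply ENNReal.ofReal_le_ofReal
        rw [pdf_prod, pdf_prod, mul_assoc, mul_left_comm (Real.exp (-(a * B.trace))), ← Real.exp_add, ← Real.exp_add]
        apply mul_le_mul_of_nonneg_left _ (by positivity)
        apply Real.exp_le_exp.mpr
        have := hL x
        linarith
    _ = 1 := by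
        rw [lintegral_const_mul' _ _ ENNReal.ofReal_ne_top, cov n L hd0 c, abs_inv, hdet,
          ← ENNReal.ofReal_mul (Real.exp_nonneg _), mul_inv_cancel₀ (Real.exp_pos _).ne',
          ENNReal.ofReal_one]
    _ ≤ 1 := le_rfl

lemma tail_std {n : ℕ} (B : Matrix (Fin n) (Fin n) ℝ)
    (hB : ∀ x, B.mulVec x ⬝ᵥ B.mulVec x ≤ 4 * (x ⬝ᵥ x)) (v : Fin n → ℝ) (t : ℝ) :
    (Measure.pi fun _ : Fin n => gaussianReal 0 1)
      {x | 46 * t < 2 * (x ⬝ᵥ (B.mulVec x + v)) - 2 * B.trace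
        - (B.mulVec x + v) ⬝ᵥ (B.mulVec x + v) / 2} ≤ ENNReal.ofReal (Real.exp (-t)) := by
  have h := mgf_bd B hB v (1 / 23) (by norm_num) (by norm_num)
  have hmeas : Measurable fun x : Fin n → ℝ => ENNReal.ofReal (Real.exp ((1 / 23) * (x ⬝ᵥ (B.mulVec x + v) - B.trace
        - (B.mulVec x + v) ⬝ᵥ (B.mulVec x + v) / 4))) := by
    apply ENNReal.measurable_ofReal.comp
    apply Continuous.measurable
    fun_prop
  have h2 := meas_ge_le_lintegral_div (μ := Measure.pi fun _ : Fin n => gaussianReal 0 1)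
    hmeas.aemeasurable (ε := ENNReal.ofReal (Real.exp t))
    (by simpa using Real.exp_pos t) ENNReal.ofReal_ne_top
  refine (measure_mono ?_).trans (h2.trans ?_)
  · intro x hx
    simp only [Set.mem_ofPred_eq] at hx ⊢
    apply ENNReal.ofReal_le_ofReal
    apply Real.exp_le_exp.mpr
    linarith
  · rw [Real.exp_neg, ENNReal.ofReal_inv_of_pos (Real.exp_pos t), ← one_div]
    exact ENNReal.div_le_div_right h _

lemma tail_gen {n : ℕ} (σ : ℝ) (B : Matrix (Fin n) (Fin n) ℝ)
    (hB : ∀ x, B.mulVec x ⬝ᵥ B.mulVec x ≤ 4 * (x ⬝ᵥ x)) (v : Fin n → ℝ) (t : ℝ) :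
    gaussPi n σ
      {x | 46 * σ ^ 2 * t < 2 * (x ⬝ᵥ (B.mulVec x + v)) - 2 * σ ^ 2 * B.trace
        - (B.mulVec x + v) ⬝ᵥ (B.mulVec x + v) / 2} ≤ ENNReal.ofReal (Real.exp (-t)) := by
  have hms : MeasurableSet {x : Fin n → ℝ | 46 * σ ^ 2 * t < 2 * (x ⬝ᵥ (B.mulVec x + v)) - 2 * σ ^ 2 * B.trace
        - (B.mulVec x + v) ⬝ᵥ (B.mulVec x + v) / 2} := by
    apply IsOpen.measurableSet
    apply isOpen_lt <;> fun_prop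
  rw [gaussPi, stdpi_scale, Measure.map_apply (by fun_prop) hms]
  by_cases hσ : σ = 0
  · subst hσ
    have h0 := dot_nn v
    refine (measure_mono (t := ∅) ?_).trans (by simp)
    intro x hx
    simp at hx
    linarith
  · refine (measure_mono ?_).trans (tail_std B hB (σ⁻¹ • v) t)
    intro x hx
    simp only [Set.mem_preimage, Set.mem_ofPred_eq] at hx ⊢
    have e : B.mulVec (σ • x) + v = σ • (B.mulVec x + σ⁻¹ • v) := by
      rw [smul_add, smul_smul, mul_inv_cancel₀ hσ, one_smul, Matrix.mulVec_smul]
    rw [e] at hx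
    simp only [smul_dotProduct, dotProduct_smul, smul_eq_mul] at hx
    have h2 : 0 < σ ^ 2 := by positivity
    refine lt_of_mul_lt_mul_left ?_ h2.le
    linarith

lemma sqNorm_eq {n : ℕ} (v : Fin n → ℝ) : sqNorm v = v ⬝ᵥ v := by
  simp [sqNorm, dotProduct, pow_two]

lemma op_bound {n : ℕ} (A : Matrix (Fin n) (Fin n) ℝ) (h : opNorm A ≤ 1) (x : Fin n → ℝ) :
    A.mulVec x ⬝ᵥ A.mulVec x ≤ x ⬝ᵥ x := by
  have hF : ∀ x, sqNorm (A.mulVec x) ≤ (∑ i, A i ⬝ᵥ A i) * sqNorm x := by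
    intro x
    rw [Finset.sum_mul, sqNorm_eq x, sqNorm]
    exact Finset.sum_le_sum fun i _ => dot_cs (A i) x
  have hF0 : 0 ≤ ∑ i, A i ⬝ᵥ A i := Finset.sum_nonneg fun i _ => dot_nn _
  have hb : BddAbove {c | ∃ x : Fin n → ℝ, sqNorm x ≤ 1 ∧ c = Real.sqrt (sqNorm (A.mulVec x))} := by
    refine ⟨Real.sqrt (∑ i, A i ⬝ᵥ A i), ?_⟩
    rintro c ⟨x, hx, rfl⟩
    apply Real.sqrt_le_sqrt
    nlinarith [hF x]
  have h1 : ∀ x, sqNorm x ≤ 1 → sqNorm (A.mulVec x) ≤ 1 := by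
    intro x hx
    have := (le_csSup hb ⟨x, hx, rfl⟩).trans h
    rw [Real.sqrt_le_left (by norm_num)] at this
    simpa using this
  by_cases h0 : x ⬝ᵥ x = 0
  · have := hF x
    rw [sqNorm_eq, sqNorm_eq, h0, mul_zero] at this
    rw [h0]; exact this
  · have hp : 0 < x ⬝ᵥ x := lt_of_le_of_ne (dot_nn x) (Ne.symm h0)
    set r := Real.sqrt (x ⬝ᵥ x) with hr
    have hr2 : r * r = x ⬝ᵥ x := Real.mul_self_sqrt hp.le
    have hr0 : 0 < r := Real.sqrt_pos.mpr hp
    have h2 := h1 (r⁻¹ • x) (by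
      rw [sqNorm_eq]; simp only [smul_dotProduct, dotProduct_smul, smul_eq_mul]
      rw [← hr2]; field_simp; rfl)
    rw [sqNorm_eq, Matrix.mulVec_smul] at h2
    simp only [smul_dotProduct, dotProduct_smul, smul_eq_mul] at h2
    rw [← hr2]
    have : r⁻¹ * (r⁻¹ * (A.mulVec x ⬝ᵥ A.mulVec x)) = (A.mulVec x ⬝ᵥ A.mulVec x) / (r * r) := by
      field_simp
    rw [this, div_le_one (by positivity)] at h2
    exact h2

lemma diff_bound {n : ℕ} (A A' : Matrix (Fin n) (Fin n) ℝ) (h : opNorm A ≤ 1) (h' : opNorm A' ≤ 1)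
    (x : Fin n → ℝ) :
    (A - A').mulVec x ⬝ᵥ (A - A').mulVec x ≤ 4 * (x ⬝ᵥ x) := by
  have h1 := op_bound A h x
  have h2 := op_bound A' h' x
  have h3 := dot_nn (A.mulVec x + A'.mulVec x)
  rw [Matrix.sub_mulVec]
  simp only [add_dotProduct, dotProduct_add, sub_dotProduct, dotProduct_sub] at h3 ⊢
  linarith

lemma Hpen_eq {n M : ℕ} (A : Fin M → Matrix (Fin n) (Fin n) ℝ) (b : Fin M → Fin n → ℝ)
    (σ : ℝ) (y : Fin n → ℝ) (θ : Fin M → ℝ) (hθ : ∑ j, θ j = 1) :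
    Hpen A b σ y θ = (muV A b y θ ⬝ᵥ muV A b y θ) / 2 +
      ∑ j, θ j * ((((A j).mulVec y + b j) ⬝ᵥ ((A j).mulVec y + b j)) / 2
        - 2 * (y ⬝ᵥ ((A j).mulVec y + b j)) + 2 * σ ^ 2 * (A j).trace) := by
  set m : Fin M → Fin n → ℝ := fun j => (A j).mulVec y + b j with hm
  have hmu : muV A b y θ = ∑ j, θ j • m j := rfl
  have hlin : ∀ u : Fin n → ℝ, u ⬝ᵥ muV A b y θ = ∑ j, θ j * (u ⬝ᵥ m j) := by
    intro u
    rw [hmu, dotProduct_sum]; simp only [dotProduct_smul, smul_eq_mul]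
  have hpen : pen A b y θ = ∑ j, θ j * (m j ⬝ᵥ m j) - muV A b y θ ⬝ᵥ muV A b y θ := by
    have : ∀ j, θ j * sqNorm (muV A b y θ - m j) = θ j * (m j ⬝ᵥ m j)
        - 2 * (θ j * (muV A b y θ ⬝ᵥ m j)) + θ j * (muV A b y θ ⬝ᵥ muV A b y θ) := by
      intro j
      rw [sqNorm_eq]
      simp only [sub_dotProduct, dotProduct_sub, dotProduct_comm (m j) (muV A b y θ)]
      ring
    rw [pen]
    change ∑ j, θ j * sqNorm (muV A b y θ - m j) = _
    simp only [this]
    rw [Finset.sum_add_distrib, Finset.sum_sub_distrib, ← Finset.mul_sum, ← hlin, ← Finset.sum_mul, hθ]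
    ring
  have hy : ∑ i, y i * muV A b y θ i = ∑ j, θ j * (y ⬝ᵥ m j) := by
    rw [← hlin]; rfl
  have hs : ∑ j, θ j * ((m j ⬝ᵥ m j) / 2 - 2 * (y ⬝ᵥ m j) + 2 * σ ^ 2 * (A j).trace) =
      (∑ j, θ j * (m j ⬝ᵥ m j)) / 2 - 2 * ∑ j, θ j * (y ⬝ᵥ m j)
        + 2 * σ ^ 2 * ∑ j, θ j * (A j).trace := by
    rw [Finset.sum_div, Finset.mul_sum, Finset.mul_sum, ← Finset.sum_sub_distrib, ← Finset.sum_add_distrib]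
    exact Finset.sum_congr rfl fun j _ => by ring
  rw [Hpen, Cp, hpen, sqNorm_eq, hy]
  change _ = _ + ∑ j, θ j * ((m j ⬝ᵥ m j) / 2 - 2 * (y ⬝ᵥ m j) + 2 * σ ^ 2 * (A j).trace)
  rw [hs]
  ring

lemma determ {n M : ℕ} (A : Fin M → Matrix (Fin n) (Fin n) ℝ) (b : Fin M → Fin n → ℝ)
    (σ : ℝ) (f ξ : Fin n → ℝ) (θ : Fin M → ℝ) (hθ : θ ∈ simplex M)
    (hmin : ∀ θ' ∈ simplex M, Hpen A b σ (f + ξ) θ ≤ Hpen A b σ (f + ξ) θ') (R : ℝ) (j : Fin M)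
    (hR : ∀ k, 2 * (ξ ⬝ᵥ (((A k).mulVec (f + ξ) + b k) - ((A j).mulVec (f + ξ) + b j)))
      - 2 * σ ^ 2 * ((A k).trace - (A j).trace)
      - ((((A k).mulVec (f + ξ) + b k) - ((A j).mulVec (f + ξ) + b j)) ⬝ᵥ
        (((A k).mulVec (f + ξ) + b k) - ((A j).mulVec (f + ξ) + b j))) / 2 ≤ R) :
    sqNorm (muV A b (f + ξ) θ - f) ≤ sqNorm ((A j).mulVec (f + ξ) + b j - f) + R := by
  obtain ⟨hθ0, hθ1⟩ := hθ
  set y := f + ξ with hy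
  set m : Fin M → Fin n → ℝ := fun j => (A j).mulVec y + b j with hm
  set ℓ : Fin M → ℝ := fun j => (m j ⬝ᵥ m j) / 2 - 2 * (y ⬝ᵥ m j) + 2 * σ ^ 2 * (A j).trace with hℓ
  have hH : ∀ θ : Fin M → ℝ, ∑ j, θ j = 1 → Hpen A b σ y θ =
      (muV A b y θ ⬝ᵥ muV A b y θ) / 2 + ∑ j, θ j * ℓ j := fun θ h => Hpen_eq A b σ y θ h
  set μ := muV A b y θ with hμ
  have hmu : μ = ∑ j, θ j • m j := rfl
  have hlin : ∀ u : Fin n → ℝ, u ⬝ᵥ μ = ∑ j, θ j * (u ⬝ᵥ m j) := by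
    intro u
    rw [hmu, dotProduct_sum]; simp only [dotProduct_smul, smul_eq_mul]
  set ℓθ := ∑ k, θ k * ℓ k with hℓθ
  -- first-order condition
  have foc : 0 ≤ ℓ j - ℓθ + (μ ⬝ᵥ m j - μ ⬝ᵥ μ) := by
    have hq : ∀ t : ℝ, 0 < t → t ≤ 1 → 0 ≤ (ℓ j - ℓθ + (μ ⬝ᵥ m j - μ ⬝ᵥ μ))
        + t * ((m j - μ) ⬝ᵥ (m j - μ) / 2) := by
      intro t ht0 ht1
      set θ' : Fin M → ℝ := (1 - t) • θ + t • Pi.single j 1 with hθ'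
      have hs1 : ∑ k, θ' k = 1 := by
        simp [hθ', Finset.sum_add_distrib, ← Finset.mul_sum, hθ1]
      have hmem : θ' ∈ simplex M := by
        refine ⟨fun k => ?_, hs1⟩
        have h1 : 0 ≤ (Pi.single j 1 : Fin M → ℝ) k := by
          rw [Pi.single_apply]; split_ifs <;> norm_num
        have := hθ0 k
        simp only [hθ', Pi.add_apply, Pi.smul_apply, smul_eq_mul]
        have : 0 ≤ 1 - t := by linarith
        positivity
      have hmu' : muV A b y θ' = (1 - t) • μ + t • m j := by
        change ∑ k, θ' k • m k = _
        rw [hmu]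
        simp only [hθ', Pi.add_apply, Pi.smul_apply, smul_eq_mul, add_smul, Finset.sum_add_distrib,
          mul_smul, ← Finset.smul_sum]
        congr 2
        simp [Pi.single_apply]
      have hl' : ∑ k, θ' k * ℓ k = (1 - t) * ℓθ + t * ℓ j := by
        simp only [hθ', Pi.add_apply, Pi.smul_apply, smul_eq_mul, add_mul, Finset.sum_add_distrib,
          mul_assoc, ← Finset.mul_sum]
        simp [Pi.single_apply, hℓθ]
      have h := hmin θ' hmem
      rw [hH θ hθ1, hH θ' hs1, hmu', hl', ← hμ] at h
      simp only [add_dotProduct, dotProduct_add, smul_dotProduct, dotProduct_smul, smul_eq_mul,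
        sub_dotProduct, dotProduct_sub, dotProduct_comm (m j) μ] at h ⊢
      by_contra! hneg
      have := mul_neg_of_pos_of_neg ht0 hneg
      nlinarith
    by_contra! hneg
    set D := (m j - μ) ⬝ᵥ (m j - μ) / 2 with hD
    have hD0 : 0 ≤ D := div_nonneg (dot_nn _) (by norm_num)
    set g := ℓ j - ℓθ + (μ ⬝ᵥ m j - μ ⬝ᵥ μ) with hg
    have h1 := hq 1 one_pos le_rfl
    have hDp : 0 < D := by linarith
    have h2 := hq (-g / (2 * D)) (div_pos (by linarith) (by linarith)) (by
      rw [div_le_one (by linarith)]; linarith)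
    have : -g / (2 * D) * D = -g / 2 := by field_simp
    rw [this] at h2
    linarith
  have hsum : ∑ k, θ k * (2 * (ξ ⬝ᵥ (m k - m j)) - 2 * σ ^ 2 * ((A k).trace - (A j).trace)
      - ((m k - m j) ⬝ᵥ (m k - m j)) / 2) ≤ R := by
    calc _ ≤ ∑ k, θ k * R := Finset.sum_le_sum fun k _ => mul_le_mul_of_nonneg_left (hR k) (hθ0 k)
      _ = R := by rw [← Finset.sum_mul, hθ1, one_mul]
  have hexp : ∑ k, θ k * (2 * (ξ ⬝ᵥ (m k - m j)) - 2 * σ ^ 2 * ((A k).trace - (A j).trace)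
      - ((m k - m j) ⬝ᵥ (m k - m j)) / 2) = - ℓθ - 2 * (f ⬝ᵥ μ) + m j ⬝ᵥ μ
        + (- 2 * (ξ ⬝ᵥ m j) + 2 * σ ^ 2 * (A j).trace - (m j ⬝ᵥ m j) / 2) := by
    rw [hlin f, hlin (m j), hℓθ]
    have : (- 2 * (ξ ⬝ᵥ m j) + 2 * σ ^ 2 * (A j).trace - (m j ⬝ᵥ m j) / 2) =
      ∑ k, θ k * (- 2 * (ξ ⬝ᵥ m j) + 2 * σ ^ 2 * (A j).trace - (m j ⬝ᵥ m j) / 2) := by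
      rw [← Finset.sum_mul, hθ1, one_mul]
    rw [this, Finset.mul_sum, ← Finset.sum_neg_distrib, ← Finset.sum_sub_distrib,
      ← Finset.sum_add_distrib, ← Finset.sum_add_distrib]
    refine Finset.sum_congr rfl fun k _ => ?_
    simp only [hℓ, hy, sub_dotProduct, dotProduct_sub, add_dotProduct, dotProduct_comm (m k) (m j)]
    ring
  rw [hexp] at hsum
  change _ ≤ sqNorm (m j - f) + R
  rw [sqNorm_eq, sqNorm_eq]
  simp only [hℓ, hy, sub_dotProduct, dotProduct_sub, add_dotProduct, dotProduct_comm (m j) μ,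
    dotProduct_comm (m j) f, dotProduct_comm μ f] at foc hsum ⊢
  linarith

/-- **Theorem 2.1 (main result), deviation bound.** -/
theorem sharp_oracle_inequality_deviation
    {n M : ℕ} (hM : 2 ≤ M) (σ : ℝ) (f : Fin n → ℝ)
    (A : Fin M → Matrix (Fin n) (Fin n) ℝ) (b : Fin M → Fin n → ℝ)
    (hop : ∀ j, opNorm (A j) ≤ 1)
    {Ω : Type} [MeasurableSpace Ω] (P : Measure Ω) [IsProbabilityMeasure P]
    (ξ : Ω → Fin n → ℝ) (hξ : Measurable ξ) (hlaw : P.map ξ = gaussPi n σ)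
    (θhat : Ω → Fin M → ℝ)
    (hθmem : ∀ ω, θhat ω ∈ simplex M)
    (hθmin : ∀ ω, ∀ θ ∈ simplex M,
      Hpen A b σ (f + ξ ω) (θhat ω) ≤ Hpen A b σ (f + ξ ω) θ) :
    ∀ x : ℝ, 0 < x →
      ENNReal.ofReal (1 - 2 * Real.exp (-x)) ≤
        P {ω | ∀ j, sqNorm (muV A b (f + ξ ω) (θhat ω) - f) ≤
            sqNorm ((A j).mulVec (f + ξ ω) + b j - f)
              + 46 * σ ^ 2 * (2 * Real.log M + x)} := by
  intro x hx
  set t := 2 * Real.log M + x with ht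
  have hM0 : (0 : ℝ) < M := by exact_mod_cast (by omega : 0 < M)
  set E : Fin M × Fin M → Set (Fin n → ℝ) := fun p =>
    {z | 46 * σ ^ 2 * t < 2 * (z ⬝ᵥ ((A p.1 - A p.2).mulVec z + ((A p.1 - A p.2).mulVec f + (b p.1 - b p.2))))
        - 2 * σ ^ 2 * (A p.1 - A p.2).trace
        - ((A p.1 - A p.2).mulVec z + ((A p.1 - A p.2).mulVec f + (b p.1 - b p.2))) ⬝ᵥ
          ((A p.1 - A p.2).mulVec z + ((A p.1 - A p.2).mulVec f + (b p.1 - b p.2))) / 2} with hE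
  have hEm : ∀ p, MeasurableSet (E p) := by
    intro p
    apply IsOpen.measurableSet
    apply isOpen_lt <;> fun_prop
  have hEt : ∀ p, P (ξ ⁻¹' E p) ≤ ENNReal.ofReal (Real.exp (-t)) := by
    intro p
    rw [← Measure.map_apply hξ (hEm p), hlaw]
    exact tail_gen σ _ (diff_bound _ _ (hop _) (hop _)) _ t
  have hU : P (⋃ p, ξ ⁻¹' E p) ≤ ENNReal.ofReal (2 * Real.exp (-x)) := by
    calc P (⋃ p, ξ ⁻¹' E p) ≤ ∑ p, P (ξ ⁻¹' E p) := measure_iUnion_fintype_le _ _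
      _ ≤ ∑ _p : Fin M × Fin M, ENNReal.ofReal (Real.exp (-t)) := Finset.sum_le_sum fun p _ => hEt p
      _ = ENNReal.ofReal (Real.exp (-x)) := by
        rw [← ENNReal.ofReal_sum_of_nonneg fun _ _ => Real.exp_nonneg _]
        congr 1
        simp only [Finset.sum_const, Finset.card_univ, Fintype.card_prod, Fintype.card_fin,
          nsmul_eq_mul, Nat.cast_mul]
        have : -t = -x + -(Real.log M) + -(Real.log M) := by rw [ht]; ring
        rw [this, Real.exp_add, Real.exp_add, Real.exp_neg (Real.log M), Real.exp_log hM0]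
        field_simp
      _ ≤ _ := ENNReal.ofReal_le_ofReal (by linarith [Real.exp_pos (-x)])
  have hUm : MeasurableSet (⋃ p, ξ ⁻¹' E p) := MeasurableSet.iUnion fun p => hξ (hEm p)
  calc ENNReal.ofReal (1 - 2 * Real.exp (-x))
      = 1 - ENNReal.ofReal (2 * Real.exp (-x)) := by
        rw [ENNReal.ofReal_sub _ (by positivity), ENNReal.ofReal_one]
    _ ≤ 1 - P (⋃ p, ξ ⁻¹' E p) := tsub_le_tsub_left hU _
    _ = P (⋃ p, ξ ⁻¹' E p)ᶜ := (prob_compl_eq_one_sub hUm).symm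
    _ ≤ _ := by
      refine measure_mono ?_
      intro ω hω j
      simp only [Set.mem_compl_iff, Set.mem_iUnion, not_exists] at hω
      refine determ A b σ f (ξ ω) (θhat ω) (hθmem ω) (hθmin ω) _ j fun k => ?_
      have h := hω (k, j)
      simp only [hE, Set.mem_preimage, Set.mem_ofPred_eq, not_lt] at h
      have e : (A k - A j).mulVec (ξ ω) + ((A k - A j).mulVec f + (b k - b j)) =
          ((A k).mulVec (f + ξ ω) + b k) - ((A j).mulVec (f + ξ ω) + b j) := by
        simp only [Matrix.sub_mulVec, Matrix.mulVec_add]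
        abel
      rw [e, Matrix.trace_sub] at h
      exact h

end
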